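/- Let G = (V,E) be a 2-vertex-connected simple graph on at least 3 vertices equipped with a removable pairing (R,P). Then there exist finitely many subsets M_1, …, M_k of E and nonnegative reals p_1, …, p_k summing to 1 such that: (a) for every edge e ∈ E, the sum of p_i over all i with e ∈ M_i equals 1/3; (b) for each i, M_i contains at most one edge from every pair of P; and (c) for each i and every vertex v ∈ V, deg_G(v) + |{e ∈ M_i : v is an endpoint of e}| is even. -/

import Mathlib

open SimpleGraph

/-! Detach the two edges of each pair in `P` from their common end `v`, attach them to a new vertex
instead, and join this vertex to `v` by a new edge. The resulting multigraph has no cut of size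
one, because neither `G` nor the removal of a pair from `G` produces one. Hence the vector with all
entries `1 / 3` satisfies the inequalities of the polytope of edge sets `M` with the same degree
parities as the whole edge set, and is a convex combination of such sets. A new vertex has degree
three, so each `M` contains an odd number of the edges there; on average it contains one, so it
always contains exactly one, and at most one edge of the pair.

The description of the polytope reduces to the minimum weight of a `T`-join for integral weights
which are even on all cycles. As in Sebő's proof, for positive weights some vertex `b` is met by
every minimum join in exactly one edge, and the weights around `b` may be lowered by one. -/

namespace Multigraph

open Finset Function
open scoped symmDiff

section Sums

variable {E : Type*} [DecidableEq E]

lemma sum_symmDiff_add_two_nsmul_sum_inter {A : Type*} [AddCommMonoid A] (f : E → A)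
    (M N : Finset E) :
    ∑ e ∈ M ∆ N, f e + 2 • ∑ e ∈ M ∩ N, f e = ∑ e ∈ M, f e + ∑ e ∈ N, f e := by
  rw [symmDiff_def, sup_eq_union, sum_union disjoint_sdiff_sdiff, two_nsmul,
    ← sum_inter_add_sum_sdiff M N f, ← sum_inter_add_sum_sdiff N M f, inter_comm N M]
  abel

lemma sum_symmDiff_add_sum_symmDiff (f : E → ℕ) {A B C : Finset E} (hC : C ⊆ A ∆ B) :
    ∑ e ∈ A ∆ C, f e + ∑ e ∈ B ∆ C, f e = ∑ e ∈ A, f e + ∑ e ∈ B, f e := by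
  have hsplit : ∑ e ∈ A ∩ C, f e + ∑ e ∈ B ∩ C, f e = ∑ e ∈ C, f e := by
    have hBC : C \ A = B ∩ C := by
      ext e
      have := @hC e
      simp only [mem_symmDiff, mem_sdiff, mem_inter] at this ⊢
      tauto
    rw [← hBC, inter_comm, sum_inter_add_sum_sdiff]
  have hA := sum_symmDiff_add_two_nsmul_sum_inter f A C
  have hB := sum_symmDiff_add_two_nsmul_sum_inter f B C
  simp only [smul_eq_mul] at hA hB
  omega

lemma sum_symmDiff_singleton_of_eq_zero {w : E → ℕ} {e : E} (he : w e = 0) (M : Finset E) :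
    ∑ i ∈ M ∆ {e}, w i = ∑ i ∈ M, w i := by
  have h := sum_symmDiff_add_two_nsmul_sum_inter w M {e}
  have hinter : ∑ i ∈ M ∩ {e}, w i = 0 :=
    sum_eq_zero fun i hi => mem_singleton.1 (mem_inter.1 hi).2 ▸ he
  simpa [hinter, he] using h

lemma card_symmDiff_inter_le (M N L : Finset E) : #(M ∆ N ∩ L) ≤ #(M ∩ L) + #(N ∩ L) := by
  refine (card_le_card ?_).trans (card_union_le _ _)
  rw [← union_inter_distrib_right]
  exact inter_subset_inter_right symmDiff_subset_union

lemma card_inter_eq_sum (M N : Finset E) : #(M ∩ N) = ∑ e ∈ M, if e ∈ N then 1 else 0 := by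
  rw [← filter_mem_eq_inter, card_filter]

end Sums

section Boundary

variable {V W E : Type*}

/-- Mod 2 chains of vertices, encoded as functionals on vertex labellings: a finite set `T` of
vertices is the functional `S ↦ ∑ v ∈ T, S v`, the parity of the intersection of `T` with the set
labelled `S`. -/
abbrev VertexChain (V : Type*) := Module.Dual (ZMod 2) (V → ZMod 2)

/-- The mod 2 boundary `x + y` of an edge `xy`. -/
def edgeBoundary : Sym2 V → VertexChain V :=
  Sym2.lift ⟨fun x y => LinearMap.proj x + LinearMap.proj y, fun _ _ => add_comm _ _⟩

@[simp]
lemma edgeBoundary_mk (x y : V) (S : V → ZMod 2) : edgeBoundary s(x, y) S = S x + S y := rfl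

lemma edgeBoundary_map (f : V → W) (z : Sym2 V) (S : W → ZMod 2) :
    edgeBoundary (z.map f) S = edgeBoundary z (S ∘ f) := by
  induction z with
  | _ x y => rfl

lemma edgeBoundary_of_isDiag {z : Sym2 V} (hz : z.IsDiag) : edgeBoundary z = 0 := by
  induction z with
  | _ x y =>
    obtain rfl : x = y := hz
    exact ZModModule.add_self _

lemma edgeBoundary_add_edgeBoundary (x y z : V) :
    edgeBoundary s(x, y) + edgeBoundary s(y, z) = edgeBoundary s(x, z) :=
  ZModModule.add_add_add_cancel _ _ _

lemma edgeBoundary_apply_eq_one {x y : V} {S : V → ZMod 2} :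
    edgeBoundary s(x, y) S = 1 ↔ S x ≠ S y := by
  rw [edgeBoundary_mk]
  generalize S x = i, S y = j
  decide +revert

/-- The mod 2 boundary of a set of edges in the multigraph whose edge `e` has the ends `ends e`.
A set `M` with `boundary ends M = τ` is called a `τ`-join. -/
def boundary (ends : E → Sym2 V) (M : Finset E) : VertexChain V :=
  ∑ e ∈ M, edgeBoundary (ends e)

lemma boundary_apply_eq_sum (ends : E → Sym2 V) (M : Finset E) (S : V → ZMod 2) :
    boundary ends M S = ∑ e ∈ M, edgeBoundary (ends e) S :=
  LinearMap.sum_apply _ _ _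

@[simp]
lemma boundary_empty (ends : E → Sym2 V) : boundary ends ∅ = 0 := rfl

@[simp]
lemma boundary_singleton (ends : E → Sym2 V) (e : E) :
    boundary ends {e} = edgeBoundary (ends e) :=
  sum_singleton _ _

lemma boundary_map (ends : E → Sym2 V) (f : V → W) (M : Finset E) (S : W → ZMod 2) :
    boundary (fun e => (ends e).map f) M S = boundary ends M (S ∘ f) := by
  simp only [boundary_apply_eq_sum, edgeBoundary_map]

variable [DecidableEq E]

lemma boundary_symmDiff (ends : E → Sym2 V) (M N : Finset E) :
    boundary ends (M ∆ N) = boundary ends M + boundary ends N := by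
  have h := sum_symmDiff_add_two_nsmul_sum_inter (fun e => edgeBoundary (ends e)) M N
  rwa [two_nsmul, ZModModule.add_self, add_zero] at h

lemma boundary_symmDiff_of_boundary_eq_zero {ends : E → Sym2 V} {C : Finset E}
    (hC : boundary ends C = 0) (M : Finset E) : boundary ends (M ∆ C) = boundary ends M := by
  rw [boundary_symmDiff, hC, add_zero]

lemma boundary_erase (ends : E → Sym2 V) {M : Finset E} {e : E} (he : e ∈ M) :
    boundary ends (M.erase e) = boundary ends M + edgeBoundary (ends e) := by
  rw [boundary, boundary, ← sum_erase_add M _ he, add_assoc, ZModModule.add_self, add_zero]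

end Boundary

section Cut

variable {V W E : Type*} [Fintype E] (ends : E → Sym2 V)

/-- The cut of the vertex set with indicator `S`: the edges with exactly one end in it. -/
def cut (S : V → ZMod 2) : Finset E := {e | edgeBoundary (ends e) S = 1}

variable {ends} in
@[simp]
lemma mem_cut {S : V → ZMod 2} {e : E} : e ∈ cut ends S ↔ edgeBoundary (ends e) S = 1 := by
  simp [cut]

lemma cut_map (f : V → W) (S : W → ZMod 2) :
    cut (fun e => (ends e).map f) S = cut ends (S ∘ f) := by
  simp only [cut, edgeBoundary_map]

lemma boundary_apply [DecidableEq E] (M : Finset E) (S : V → ZMod 2) :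
    boundary ends M S = #(M ∩ cut ends S) := by
  rw [boundary_apply_eq_sum, card_inter_eq_sum, Nat.cast_sum]
  refine sum_congr rfl fun e _ => ?_
  simp only [mem_cut]
  generalize edgeBoundary (ends e) S = i
  decide +revert

variable [DecidableEq V]

/-- The edges, other than loops, at the vertex `b`. -/
def star (b : V) : Finset E := cut ends (Pi.single b 1)

variable {ends}

lemma mem_star_iff {b : V} {e : E} : e ∈ star ends b ↔ b ∈ ends e ∧ ¬ (ends e).IsDiag := by
  rw [star, mem_cut]
  induction ends e with
  | _ x y =>
    rw [edgeBoundary_apply_eq_one, Sym2.mem_iff, Sym2.mk_isDiag_iff]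
    grind

lemma mem_star_iff_exists {b : V} {e : E} :
    e ∈ star ends b ↔ ∃ x, x ≠ b ∧ ends e = s(b, x) := by
  rw [mem_star_iff]
  constructor
  · rintro ⟨hb, hloop⟩
    obtain ⟨x, hx⟩ := Sym2.mem_iff_exists.1 hb
    exact ⟨x, fun hxb => hloop (by simp [hx, hxb]), hx⟩
  · rintro ⟨x, hxb, hx⟩
    simpa [hx] using hxb.symm

lemma boundary_single [DecidableEq E] (M : Finset E) (b : V) :
    boundary ends M (Pi.single b 1) = #(M ∩ star ends b) :=
  boundary_apply ends M _

end Cut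

section Linked

variable {V E : Type*} {ends : E → Sym2 V}

/-- Two vertices are linked in an edge set `D` if they are the ends of a path in `D`; up to closed
trails, a path between `x` and `y` is an edge set with boundary `x + y`. -/
def Linked (ends : E → Sym2 V) (D : Finset E) (x y : V) : Prop :=
  ∃ P ⊆ D, boundary ends P = edgeBoundary s(x, y)

lemma Linked.refl (D : Finset E) (x : V) : Linked ends D x x :=
  ⟨∅, empty_subset D, (edgeBoundary_of_isDiag (Sym2.mk_isDiag_iff.2 rfl)).symm⟩

lemma Linked.symm {D : Finset E} {x y : V} : Linked ends D x y → Linked ends D y x := by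
  rintro ⟨P, hPD, hP⟩
  exact ⟨P, hPD, by rw [hP, Sym2.eq_swap]⟩

lemma Linked.trans {D : Finset E} {x y z : V} :
    Linked ends D x y → Linked ends D y z → Linked ends D x z := by
  classical
  rintro ⟨P, hPD, hP⟩ ⟨Q, hQD, hQ⟩
  refine ⟨P ∆ Q, symmDiff_subset_union.trans (union_subset hPD hQD), ?_⟩
  rw [boundary_symmDiff, hP, hQ, edgeBoundary_add_edgeBoundary]

lemma Linked.of_mem {D : Finset E} {e : E} (he : e ∈ D) {x y : V} (hxy : ends e = s(x, y)) :
    Linked ends D x y :=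
  ⟨{e}, singleton_subset_iff.2 he, by rw [boundary_singleton, hxy]⟩

variable [Fintype E] [DecidableEq E] [DecidableEq V]

lemma not_linked_sdiff_star (D : Finset E) {x b : V} (hxb : x ≠ b) :
    ¬ Linked ends (D \ star ends b) x b := by
  rintro ⟨P, hPD, hP⟩
  have hPb : P ∩ star ends b = ∅ := disjoint_iff_inter_eq_empty.1 (disjoint_of_subset_left hPD
    sdiff_disjoint)
  have h := congrArg (· (Pi.single b 1)) hP
  simp [boundary_single, hPb, hxb.symm] at h

lemma linked_of_forall_not_linked {D : Finset E} {a b x : V} {f : E}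
    (hD : boundary ends D = edgeBoundary s(a, b)) (hf : f ∈ D) (hxb : x ≠ b)
    (hfx : ends f = s(b, x))
    (hf_unlinked : ∀ g ∈ D, g ≠ f → ∀ y, y ≠ b → ends g = s(b, y) →
      ¬ Linked ends (D \ star ends b) x y) :
    Linked ends (D \ star ends b) x a := by
  classical
  set D₀ := D \ star ends b
  let S : V → ZMod 2 := fun y => if Linked ends D₀ x y then 1 else 0
  have hSb : S b = 0 := if_neg (not_linked_sdiff_star D hxb)
  have hSD : boundary ends D S = 1 := by
    rw [boundary_apply_eq_sum, sum_eq_single_of_mem f hf, hfx, edgeBoundary_mk, hSb, zero_add]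
    · exact if_pos (Linked.refl D₀ x)
    · intro e he hef
      by_cases hestar : e ∈ star ends b
      · obtain ⟨y, hyb, hey⟩ := mem_star_iff_exists.1 hestar
        rw [hey, edgeBoundary_mk, hSb, zero_add]
        exact if_neg (hf_unlinked e he hef y hyb hey)
      · obtain ⟨⟨y, z⟩, hyz⟩ := Sym2.mk_surjective (ends e)
        have hlink : Linked ends D₀ y z := Linked.of_mem (mem_sdiff.2 ⟨he, hestar⟩) hyz.symm
        have hS : S y = S z :=
          if_congr ⟨fun h => h.trans hlink, fun h => h.trans hlink.symm⟩ rfl rfl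
        rw [← hyz]
        exact (congrArg (· + S z) hS).trans (ZModModule.add_self _)
  rw [hD, edgeBoundary_mk, hSb, add_zero] at hSD
  by_contra hxa
  exact zero_ne_one ((if_neg hxa).symm.trans hSD)

lemma exists_linked_neighbors {D : Finset E} {a b : V}
    (hD : boundary ends D = edgeBoundary s(a, b)) (h2 : 2 ≤ #(D ∩ star ends b)) :
    ∃ f ∈ D, ∃ g ∈ D, f ≠ g ∧ ∃ x y, x ≠ b ∧ y ≠ b ∧ ends f = s(b, x) ∧ ends g = s(b, y) ∧
      Linked ends (D \ star ends b) x y := by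
  obtain ⟨f, hf, g, hg, hfg⟩ := one_lt_card.1 h2
  simp only [mem_inter, mem_star_iff_exists] at hf hg
  obtain ⟨hfD, x, hxb, hfx⟩ := hf
  obtain ⟨hgD, y, hyb, hgy⟩ := hg
  by_contra! hno
  have hxa : Linked ends (D \ star ends b) x a :=
    linked_of_forall_not_linked hD hfD hxb hfx fun e he hef u hub heu =>
      hno f hfD e he hef.symm x u hxb hub hfx heu
  have hya : Linked ends (D \ star ends b) y a :=
    linked_of_forall_not_linked hD hgD hyb hgy fun e he heg u hub heu =>
      hno g hgD e he heg.symm y u hyb hub hgy heu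
  exact hno f hfD g hgD hfg x y hxb hyb hfx hgy (hxa.trans hya.symm)

lemma exists_cycle_through {D : Finset E} {a b : V}
    (hD : boundary ends D = edgeBoundary s(a, b)) (h2 : 2 ≤ #(D ∩ star ends b)) :
    ∃ C ⊆ D, boundary ends C = 0 ∧ #(C ∩ star ends b) = 2 := by
  obtain ⟨f, hf, g, hg, hfg, x, y, hxb, hyb, hfx, hgy, P, hPD, hP⟩ :=
    exists_linked_neighbors hD h2
  have hfb : f ∈ star ends b := mem_star_iff_exists.2 ⟨x, hxb, hfx⟩
  have hgb : g ∈ star ends b := mem_star_iff_exists.2 ⟨y, hyb, hgy⟩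
  have hPb : Disjoint P (star ends b) := disjoint_of_subset_left hPD sdiff_disjoint
  have hfP : f ∉ P := fun h => disjoint_left.1 hPb h hfb
  have hgP : g ∉ P := fun h => disjoint_left.1 hPb h hgb
  refine ⟨insert f (insert g P), ?_, ?_, ?_⟩
  · exact insert_subset hf (insert_subset hg (hPD.trans sdiff_subset))
  · rw [boundary, sum_insert (by simp [hfg, hfP]), sum_insert hgP, ← boundary, hP, hfx, hgy,
      Sym2.eq_swap (a := b) (b := y), add_comm (edgeBoundary s(y, b)),
      edgeBoundary_add_edgeBoundary, Sym2.eq_swap, ZModModule.add_self]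
  · rw [insert_inter_of_mem hfb, insert_inter_of_mem hgb, disjoint_iff_inter_eq_empty.1 hPb,
      insert_empty_eq, card_pair hfg]

end Linked

section MinJoin

variable {V E : Type*}

/-- `J` is a `τ`-join of least weight. -/
def IsMinJoin (ends : E → Sym2 V) (w : E → ℕ) (τ : VertexChain V) (J : Finset E) : Prop :=
  boundary ends J = τ ∧ ∀ K, boundary ends K = τ → ∑ e ∈ J, w e ≤ ∑ e ∈ K, w e

/-- `I` is a `τ + a + b`-join, where the vertices `a` and `b` (possibly equal) are free to vary,
and has the least weight among all of these. -/
def IsMinNearJoin (ends : E → Sym2 V) (w : E → ℕ) (τ : VertexChain V) (I : Finset E) : Prop :=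
  (∃ z, boundary ends I = τ + edgeBoundary z) ∧
    ∀ K, (∃ z, boundary ends K = τ + edgeBoundary z) → ∑ e ∈ I, w e ≤ ∑ e ∈ K, w e

variable {ends : E → Sym2 V} {w : E → ℕ} {τ : VertexChain V}

lemma exists_isMinJoin [Finite E] (h : ∃ J, boundary ends J = τ) : ∃ J, IsMinJoin ends w τ J :=
  Set.exists_min_image {J | boundary ends J = τ} (fun J => ∑ e ∈ J, w e) (Set.toFinite _) h

lemma exists_mem_not_isDiag (hτ : τ ≠ 0) {J : Finset E} (hJ : boundary ends J = τ) :
    ∃ f ∈ J, ¬ (ends f).IsDiag := by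
  obtain ⟨f, hfJ, hf⟩ := exists_ne_zero_of_sum_ne_zero (hJ.trans_ne hτ)
  exact ⟨f, hfJ, fun h => hf (edgeBoundary_of_isDiag h)⟩

lemma exists_isMinNearJoin [Finite E] (hτ : τ ≠ 0) (hjoin : ∃ J, boundary ends J = τ) :
    ∃ I, IsMinNearJoin ends w τ I := by
  classical
  obtain ⟨J, rfl⟩ := hjoin
  obtain ⟨f, hfJ, -⟩ := exists_mem_not_isDiag hτ rfl
  exact Set.exists_min_image {I | ∃ z, boundary ends I = boundary ends J + edgeBoundary z}
    (fun I => ∑ e ∈ I, w e) (Set.toFinite _) ⟨J.erase f, ends f, boundary_erase ends hfJ⟩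

lemma IsMinNearJoin.ne (hw : ∀ e, ¬ (ends e).IsDiag → 0 < w e) (hτ : τ ≠ 0) {I : Finset E}
    (hI : IsMinNearJoin ends w τ I) {a b : V} (hab : boundary ends I = τ + edgeBoundary s(a, b)) :
    a ≠ b := by
  classical
  rintro rfl
  rw [edgeBoundary_of_isDiag (Sym2.mk_isDiag_iff.2 rfl), add_zero] at hab
  obtain ⟨f, hfI, hf⟩ := exists_mem_not_isDiag hτ hab
  have hle := hI.2 (I.erase f) ⟨ends f, by rw [boundary_erase ends hfI, hab]⟩
  exact hle.not_gt (sum_erase_lt_of_pos hfI (hw f hf))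

lemma IsMinJoin.symmDiff_or_sum_add_two_le [DecidableEq E] {J C : Finset E}
    (hJ : IsMinJoin ends w τ J) (hC : boundary ends C = 0) (hCw : Even (∑ e ∈ C, w e)) :
    IsMinJoin ends w τ (J ∆ C) ∨ ∑ e ∈ J, w e + 2 ≤ ∑ e ∈ J ∆ C, w e := by
  have hJC : boundary ends (J ∆ C) = τ := by
    rw [boundary_symmDiff_of_boundary_eq_zero hC, hJ.1]
  obtain hlt | heq := (hJ.2 _ hJC).lt_or_eq
  · have hsum := sum_symmDiff_add_two_nsmul_sum_inter w J C
    rw [smul_eq_mul] at hsum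
    obtain ⟨m, hm⟩ := hCw
    exact .inr (by lia)
  · exact .inl ⟨hJC, fun L hL => heq ▸ hJ.2 L hL⟩

variable [Fintype E] [DecidableEq V]

lemma IsMinNearJoin.disjoint_star (hw : ∀ e, ¬ (ends e).IsDiag → 0 < w e) {I : Finset E}
    (hI : IsMinNearJoin ends w τ I) {a b : V} (hab : boundary ends I = τ + edgeBoundary s(a, b)) :
    Disjoint I (star ends b) := by
  classical
  refine disjoint_left.2 fun f hfI hfb => ?_
  obtain ⟨x, -, hfx⟩ := mem_star_iff_exists.1 hfb
  have hle := hI.2 (I.erase f) ⟨s(a, x), by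
    rw [boundary_erase ends hfI, hab, hfx, add_assoc, edgeBoundary_add_edgeBoundary]⟩
  exact hle.not_gt (sum_erase_lt_of_pos hfI (hw f (mem_star_iff.1 hfb).2))

lemma IsMinNearJoin.card_inter_star_eq_one [DecidableEq E]
    (hw : ∀ e, ¬ (ends e).IsDiag → 0 < w e) {I J : Finset E}
    (hI : IsMinNearJoin ends w τ I) {a b : V} (hne : a ≠ b)
    (hab : boundary ends I = τ + edgeBoundary s(a, b)) (hJ : IsMinJoin ends w τ J) :
    #(J ∩ star ends b) = 1 := by
  have hIb := hI.disjoint_star hw hab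
  have hD : boundary ends (J ∆ I) = edgeBoundary s(a, b) := by
    rw [boundary_symmDiff, hJ.1, hab, ← add_assoc, ZModModule.add_self, zero_add]
  have hDb : (J ∆ I) ∩ star ends b = J ∩ star ends b := by
    rw [← inf_eq_inter, inf_symmDiff_distrib_right, inf_eq_inter, inf_eq_inter,
      disjoint_iff_inter_eq_empty.1 hIb]
    exact symmDiff_bot _
  have hodd : Odd #(J ∩ star ends b) := by
    rw [← ZMod.natCast_eq_one_iff_odd, ← hDb, ← boundary_single, hD]
    simp [hne]
  by_contra h1
  have h2 : 2 ≤ #((J ∆ I) ∩ star ends b) := by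
    rw [hDb]
    have := hodd.pos
    lia
  -- As `J` and `I` are both minimal, exchanging them along a cycle `C` through `b` keeps them so,
  -- but it brings edges at `b` into `I`.
  obtain ⟨C, hCD, hC, hCb⟩ := exists_cycle_through hD h2
  have hexch := sum_symmDiff_add_sum_symmDiff w hCD
  have hJC := hJ.2 (J ∆ C) (by rw [boundary_symmDiff_of_boundary_eq_zero hC, hJ.1])
  have hIC : boundary ends (I ∆ C) = τ + edgeBoundary s(a, b) := by
    rw [boundary_symmDiff_of_boundary_eq_zero hC, hab]
  have hICmin : IsMinNearJoin ends w τ (I ∆ C) := by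
    refine ⟨⟨_, hIC⟩, fun K hK => ?_⟩
    have := hI.2 K hK
    lia
  obtain ⟨f, hf⟩ := card_pos.1 (hCb.symm ▸ two_pos)
  obtain ⟨hfC, hfb⟩ := mem_inter.1 hf
  exact disjoint_left.1 (hICmin.disjoint_star hw hIC)
    (mem_symmDiff.2 (.inr ⟨hfC, disjoint_right.1 hIb hfb⟩)) hfb

lemma exists_forall_isMinJoin_card_inter_star_eq_one [DecidableEq E]
    (hw : ∀ e, ¬ (ends e).IsDiag → 0 < w e) (hτ : τ ≠ 0) (hjoin : ∃ J, boundary ends J = τ) :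
    ∃ b, ∀ J, IsMinJoin ends w τ J → #(J ∩ star ends b) = 1 := by
  obtain ⟨I, hI⟩ := exists_isMinNearJoin (w := w) hτ hjoin
  obtain ⟨⟨a, b⟩, hab⟩ := hI.1
  exact ⟨b, fun J hJ => hI.card_inter_star_eq_one hw (hI.ne hw hτ hab) hab hJ⟩

lemma exists_cycle_in_symmDiff [DecidableEq E] {J K : Finset E}
    (hJK : boundary ends J = boundary ends K) {b : V} (hJb : #(J ∩ star ends b) = 1)
    (hKb : 1 < #(K ∩ star ends b)) :
    ∃ C ⊆ J ∆ K, boundary ends C = 0 ∧ #(C ∩ star ends b) = 2 := by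
  have hD : boundary ends (J ∆ K) = edgeBoundary s(b, b) := by
    rw [boundary_symmDiff, hJK, ZModModule.add_self,
      edgeBoundary_of_isDiag (Sym2.mk_isDiag_iff.2 rfl)]
  have hodd : Odd #(K ∩ star ends b) := by
    rw [← ZMod.natCast_eq_one_iff_odd, ← boundary_single, ← hJK, boundary_single, hJb,
      Nat.cast_one]
  have hcard := card_symmDiff_inter_le J (J ∆ K) (star ends b)
  rw [symmDiff_symmDiff_cancel_left] at hcard
  obtain ⟨m, hm⟩ := hodd
  exact exists_cycle_through hD (by lia)

lemma IsMinJoin.sum_add_card_inter_star_le [DecidableEq E]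
    (heven : ∀ C, boundary ends C = 0 → Even (∑ e ∈ C, w e)) {b : V}
    (hb : ∀ J, IsMinJoin ends w τ J → #(J ∩ star ends b) = 1) {J K : Finset E}
    (hJ : IsMinJoin ends w τ J) (hK : boundary ends K = τ) :
    ∑ e ∈ J, w e + #(K ∩ star ends b) ≤ ∑ e ∈ K, w e + 1 := by
  induction hn : #(J ∆ K) using Nat.strong_induction_on generalizing J K with
  | _ n ih =>
  obtain hKb | hKb := le_or_gt #(K ∩ star ends b) 1
  · have := hJ.2 K hK
    lia
  obtain ⟨C, hCD, hC, hCb⟩ := exists_cycle_in_symmDiff (hJ.1.trans hK.symm) (hb J hJ) hKb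
  have hKC : boundary ends (K ∆ C) = τ := by
    rw [boundary_symmDiff_of_boundary_eq_zero hC, hK]
  have hcloser : #((J ∆ K) ∆ C) < n := by
    rw [symmDiff_of_ge hCD, ← hn]
    refine card_lt_card (sdiff_ssubset hCD ?_)
    exact (card_pos.1 (hCb.symm ▸ two_pos)).mono inter_subset_left
  -- If `J ∆ C` is not minimal, parity makes it heavier by at least two, which `K ∆ C` gains over
  -- `K`; this makes up for the two edges at `b` in `C`.
  have hw_exch := sum_symmDiff_add_sum_symmDiff w hCD
  obtain hJC | hgain := hJ.symmDiff_or_sum_add_two_le hC (heven C hC)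
  · have hJK := hJC.2 J hJ.1
    have hJJ := hJ.2 _ hJC.1
    have := ih _ (by rwa [symmDiff_right_comm]) hJC hK rfl
    lia
  · have hb_exch := sum_symmDiff_add_sum_symmDiff (fun e => if e ∈ star ends b then 1 else 0) hCD
    simp only [← card_inter_eq_sum] at hb_exch
    have hJb := hb J hJ
    have hJCb := card_symmDiff_inter_le J C (star ends b)
    have := ih _ (by rwa [← symmDiff_assoc]) hJ hKC rfl
    lia

end MinJoin

section Contraction

variable {V E : Type*} [DecidableEq V] {ends : E → Sym2 V} {τ : VertexChain V}

lemma eq_zero_or_eq_edgeBoundary {x y : V} {φ : VertexChain V}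
    (hφ : ∀ S, φ (S ∘ update id y x) = 0) : φ = 0 ∨ φ = edgeBoundary s(x, y) := by
  have hφ_apply (S : V → ZMod 2) : φ S = (S x + S y) * φ (Pi.single y 1) := by
    have hS : S = S ∘ update id y x + (S x + S y) • Pi.single y 1 := by
      ext v
      obtain rfl | hv := eq_or_ne v y
      · simp [← add_assoc, ZModModule.add_self]
      · simp [hv]
    conv_lhs => rw [hS, map_add, hφ, zero_add, map_smul, smul_eq_mul]
  obtain h0 | h1 : φ (Pi.single y 1) = 0 ∨ φ (Pi.single y 1) = 1 := by
    generalize φ (Pi.single y 1) = i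
    decide +revert
  · exact .inl (LinearMap.ext fun S => by rw [hφ_apply, h0, mul_zero, LinearMap.zero_apply])
  · exact .inr (LinearMap.ext fun S => by rw [hφ_apply, h1, mul_one, edgeBoundary_mk])

/-- The vertex chain induced by `τ` after the vertex `y` is identified with the vertex `x`. -/
def contractChain (x y : V) (τ : VertexChain V) : VertexChain V :=
  τ ∘ₗ LinearMap.funLeft (ZMod 2) (ZMod 2) (update id y x)

lemma contractChain_apply (x y : V) (τ : VertexChain V) (S : V → ZMod 2) :
    contractChain x y τ S = τ (S ∘ update id y x) := rfl

/-- The multigraph obtained from `ends` by identifying the vertex `y` with the vertex `x`; edges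
between them become loops. -/
def contractEnds (x y : V) (ends : E → Sym2 V) : E → Sym2 V :=
  fun e => (ends e).map (update id y x)

lemma contractEnds_of_isDiag (x y : V) {e : E} (he : (ends e).IsDiag) :
    (contractEnds x y ends e).IsDiag := he.map

lemma contractEnds_self {x y : V} {e : E} (he : ends e = s(x, y)) :
    (contractEnds x y ends e).IsDiag := by
  simp [contractEnds, he, update_apply]

lemma boundary_eq_or_of_contract {x y : V} {M : Finset E}
    (hM : boundary (contractEnds x y ends) M = contractChain x y τ) :
    boundary ends M = τ ∨ boundary ends M = τ + edgeBoundary s(x, y) := by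
  have hφ (S : V → ZMod 2) : (boundary ends M + τ) (S ∘ update id y x) = 0 := by
    rw [LinearMap.add_apply, ← boundary_map, ← contractChain_apply, ← hM]
    exact ZModModule.add_self _
  have hτ : boundary ends M = τ + (boundary ends M + τ) := by
    rw [add_comm, add_assoc, ZModModule.add_self, add_zero]
  obtain h0 | h1 := eq_zero_or_eq_edgeBoundary hφ
  · exact .inl (by rw [hτ, h0, add_zero])
  · exact .inr (by rw [← h1, ← hτ])

lemma exists_boundary_eq_of_contract {x y : V} {e : E} (he : ends e = s(x, y)) {w : E → ℕ}
    (hwe : w e = 0) {M : Finset E}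
    (hM : boundary (contractEnds x y ends) M = contractChain x y τ) :
    ∃ N, boundary ends N = τ ∧ ∑ i ∈ N, w i = ∑ i ∈ M, w i := by
  classical
  obtain h | h := boundary_eq_or_of_contract hM
  · exact ⟨M, h, rfl⟩
  · refine ⟨M ∆ {e}, ?_, sum_symmDiff_singleton_of_eq_zero hwe M⟩
    rw [boundary_symmDiff, h, boundary_singleton, he, add_assoc, ZModModule.add_self, add_zero]

lemma even_sum_of_contract {x y : V} {e : E} (he : ends e = s(x, y)) {w : E → ℕ} (hwe : w e = 0)
    (heven : ∀ C, boundary ends C = 0 → Even (∑ e ∈ C, w e)) {C : Finset E}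
    (hC : boundary (contractEnds x y ends) C = 0) : Even (∑ e ∈ C, w e) := by
  obtain ⟨D, hD, hDC⟩ := exists_boundary_eq_of_contract (τ := 0) he hwe hC
  exact hDC ▸ heven D hD

end Contraction

section CutCover

variable {V E : Type*} [Fintype E]

/-- Nonnegative edge weights which total at least `1` on every `τ`-odd cut, that is, a point of the
dominant of the `τ`-join polytope. -/
structure IsCutCover (ends : E → Sym2 V) (τ : VertexChain V) (z : E → ℝ) : Prop where
  nonneg (e : E) : 0 ≤ z e
  one_le_sum_cut (S : V → ZMod 2) : τ S = 1 → 1 ≤ ∑ e ∈ cut ends S, z e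

variable {ends : E → Sym2 V} {τ : VertexChain V} {z : E → ℝ}

lemma IsCutCover.exists_not_isDiag (hz : IsCutCover ends τ z) (hτ : τ ≠ 0) :
    ∃ e, ¬ (ends e).IsDiag := by
  obtain ⟨S, hS⟩ := DFunLike.ne_iff.1 hτ
  by_contra! hdiag
  have hcut : cut ends S = ∅ := by
    ext e
    simp [edgeBoundary_of_isDiag (hdiag e)]
  have h1 := hz.one_le_sum_cut S (Fin.eq_one_of_ne_zero _ hS)
  rw [hcut, sum_empty] at h1
  linarith

lemma IsCutCover.contract [DecidableEq V] (hz : IsCutCover ends τ z) (x y : V) :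
    IsCutCover (contractEnds x y ends) (contractChain x y τ) z where
  nonneg := hz.nonneg
  one_le_sum_cut S hS := by
    have hcut : cut (contractEnds x y ends) S = cut ends (S ∘ update id y x) := cut_map ends _ S
    exact hcut ▸ hz.one_le_sum_cut _ hS

section StarReduction

variable [DecidableEq V] [DecidableEq E]

/-- The weights `w`, lowered by one on the star of `b`. -/
def lowerAtStar (ends : E → Sym2 V) (b : V) (w : E → ℕ) (e : E) : ℕ :=
  if e ∈ star ends b then w e - 1 else w e

variable {w : E → ℕ}

lemma lowerAtStar_add_ite (hw : ∀ e, ¬ (ends e).IsDiag → 0 < w e) (b : V) (e : E) :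
    lowerAtStar ends b w e + (if e ∈ star ends b then 1 else 0) = w e := by
  rw [lowerAtStar]
  split_ifs with he
  · exact Nat.sub_add_cancel (hw e (mem_star_iff.1 he).2)
  · rfl

lemma sum_lowerAtStar_add_card (hw : ∀ e, ¬ (ends e).IsDiag → 0 < w e) (b : V) (M : Finset E) :
    ∑ e ∈ M, lowerAtStar ends b w e + #(M ∩ star ends b) = ∑ e ∈ M, w e := by
  rw [card_inter_eq_sum, ← sum_add_distrib]
  exact sum_congr rfl fun e _ => lowerAtStar_add_ite hw b e

lemma sum_lowerAtStar_lt (hw : ∀ e, ¬ (ends e).IsDiag → 0 < w e) {b : V} {J : Finset E}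
    (hJ : #(J ∩ star ends b) = 1) : ∑ e, lowerAtStar ends b w e < ∑ e, w e := by
  have hstar : #(J ∩ star ends b) ≤ #(star ends b) := card_le_card inter_subset_right
  have hsum := sum_lowerAtStar_add_card hw b univ
  rw [univ_inter] at hsum
  lia

lemma even_sum_lowerAtStar (hw : ∀ e, ¬ (ends e).IsDiag → 0 < w e)
    (heven : ∀ C, boundary ends C = 0 → Even (∑ e ∈ C, w e)) (b : V) {C : Finset E}
    (hC : boundary ends C = 0) : Even (∑ e ∈ C, lowerAtStar ends b w e) := by
  have hstar : Even #(C ∩ star ends b) := by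
    rw [← ZMod.natCast_eq_zero_iff_even, ← boundary_single, hC, LinearMap.zero_apply]
  have hsum := heven C hC
  rw [← sum_lowerAtStar_add_card hw b C] at hsum
  exact (Nat.even_add.1 hsum).2 hstar

lemma sum_mul_lowerAtStar_add (hw : ∀ e, ¬ (ends e).IsDiag → 0 < w e) (b : V) (z : E → ℝ) :
    ∑ e, z e * lowerAtStar ends b w e + ∑ e ∈ star ends b, z e = ∑ e, z e * w e := by
  rw [← filter_univ_mem (star ends b), sum_filter, ← sum_add_distrib]
  refine sum_congr rfl fun e _ => ?_
  rw [← lowerAtStar_add_ite hw b e]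
  split_ifs <;> push_cast <;> ring

lemma IsMinJoin.sum_le_of_lowerAtStar (hz : IsCutCover ends τ z)
    (hw : ∀ e, ¬ (ends e).IsDiag → 0 < w e)
    (heven : ∀ C, boundary ends C = 0 → Even (∑ e ∈ C, w e)) {b : V}
    (hb : ∀ J, IsMinJoin ends w τ J → #(J ∩ star ends b) = 1) {J K : Finset E}
    (hJ : IsMinJoin ends w τ J) (hK : boundary ends K = τ)
    (hKz : (∑ e ∈ K, lowerAtStar ends b w e : ℕ) ≤ ∑ e, z e * lowerAtStar ends b w e) :
    (∑ e ∈ J, w e : ℕ) ≤ ∑ e, z e * w e := by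
  have hJK : ∑ e ∈ J, w e ≤ ∑ e ∈ K, lowerAtStar ends b w e + 1 := by
    have := hJ.sum_add_card_inter_star_le heven hb hK
    have := sum_lowerAtStar_add_card hw b K
    lia
  have hτb : τ (Pi.single b 1) = 1 := by
    rw [← hJ.1, boundary_single, hb J hJ, Nat.cast_one]
  calc ((∑ e ∈ J, w e : ℕ) : ℝ) ≤ (∑ e ∈ K, lowerAtStar ends b w e : ℕ) + 1 := mod_cast hJK
    _ ≤ ∑ e, z e * lowerAtStar ends b w e + ∑ e ∈ star ends b, z e :=
      add_le_add hKz (hz.one_le_sum_cut _ hτb)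
    _ = ∑ e, z e * w e := sum_mul_lowerAtStar_add hw b z

end StarReduction

lemma card_filter_contractEnds_lt [DecidableEq V] {x y : V} {e : E} (he : ends e = s(x, y))
    (hloop : ¬ (ends e).IsDiag) :
    #{i | ¬ (contractEnds x y ends i).IsDiag} < #{i | ¬ (ends i).IsDiag} := by
  refine card_lt_card (ssubset_iff_of_subset ?_ |>.2 ⟨e, ?_, ?_⟩)
  · exact monotone_filter_right _ fun i _ hi h => hi (contractEnds_of_isDiag x y h)
  · simpa using hloop
  · simpa using contractEnds_self he

lemma IsCutCover.exists_join_sum_le_of_even (hz : IsCutCover ends τ z) {w : E → ℕ}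
    (heven : ∀ C, boundary ends C = 0 → Even (∑ e ∈ C, w e)) :
    ∃ J, boundary ends J = τ ∧ (∑ e ∈ J, w e : ℕ) ≤ ∑ e, z e * w e := by
  classical
  induction hn : ∑ e, w e + #{e | ¬ (ends e).IsDiag} using Nat.strong_induction_on
    generalizing ends w τ with
  | _ n ih =>
  -- Contract an edge of weight zero; if there is none, lower the weights around a vertex `b` which
  -- every minimum join meets in one edge.
  by_cases hw : ∃ e, ¬ (ends e).IsDiag ∧ w e = 0
  · obtain ⟨e, hloop, hwe⟩ := hw
    obtain ⟨⟨x, y⟩, hxy⟩ := Sym2.mk_surjective (ends e)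
    have hlt := card_filter_contractEnds_lt hxy.symm hloop
    obtain ⟨K, hK, hKz⟩ := ih _ (by lia) (hz.contract x y)
      (fun C hC => even_sum_of_contract hxy.symm hwe heven hC) rfl
    obtain ⟨J, hJ, hJK⟩ := exists_boundary_eq_of_contract hxy.symm hwe hK
    exact ⟨J, hJ, hJK ▸ hKz⟩
  replace hw : ∀ e, ¬ (ends e).IsDiag → 0 < w e := by
    push Not at hw
    exact fun e he => Nat.pos_of_ne_zero (hw e he)
  obtain rfl | hτ := eq_or_ne τ 0
  · exact ⟨∅, boundary_empty ends, by
      simpa using sum_nonneg fun e _ => mul_nonneg (hz.nonneg e) (Nat.cast_nonneg _)⟩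
  have hjoin : ∃ J, boundary ends J = τ := by
    obtain ⟨e, he⟩ := hz.exists_not_isDiag hτ
    have hsum : 0 < ∑ e, w e := (hw e he).trans_le (single_le_sum (by simp) (mem_univ e))
    obtain ⟨J, hJ, -⟩ := ih #{e | ¬ (ends e).IsDiag} (by lia) hz (w := 0) (by simp) (by simp)
    exact ⟨J, hJ⟩
  obtain ⟨b, hb⟩ := exists_forall_isMinJoin_card_inter_star_eq_one hw hτ hjoin
  obtain ⟨J, hJ⟩ := exists_isMinJoin (w := w) hjoin
  have hlt := sum_lowerAtStar_lt hw (hb J hJ)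
  obtain ⟨K, hK, hKz⟩ := ih _ (by lia) hz (fun C hC => even_sum_lowerAtStar hw heven b hC) rfl
  exact ⟨J, hJ.1, hJ.sum_le_of_lowerAtStar hz hw heven hb hK hKz⟩

end CutCover

section Weights

open Filter Topology

variable {V E : Type*} [Fintype E] {ends : E → Sym2 V} {τ : VertexChain V} {z : E → ℝ}

lemma IsCutCover.exists_join_sum_natCast_le (hz : IsCutCover ends τ z) (w : E → ℕ) :
    ∃ J, boundary ends J = τ ∧ ∑ e ∈ J, (w e : ℝ) ≤ ∑ e, z e * w e := by
  obtain ⟨J, hJ, hle⟩ := hz.exists_join_sum_le_of_even (w := fun e => 2 * w e)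
    fun C _ => even_sum _ fun e _ => even_two_mul _
  refine ⟨J, hJ, ?_⟩
  push_cast [← mul_sum, mul_left_comm _ (2 : ℝ)] at hle
  exact le_of_mul_le_mul_left hle two_pos

lemma IsCutCover.exists_join_sum_le (hz : IsCutCover ends τ z) {w : E → ℝ} (hw : ∀ e, 0 ≤ w e) :
    ∃ J, boundary ends J = τ ∧ ∑ e ∈ J, w e ≤ ∑ e, z e * w e := by
  have hclosed : IsClosed (⋃ J ∈ {J | boundary ends J = τ},
      {u : E → ℝ | ∑ e ∈ J, u e ≤ ∑ e, z e * u e}) :=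
    (Set.toFinite _).isClosed_biUnion fun J _ => isClosed_le (by fun_prop) (by fun_prop)
  have hlim : Tendsto (fun (n : ℕ) e => (⌊w e * n⌋₊ : ℝ) / n) atTop (𝓝 w) :=
    tendsto_pi_nhds.2 fun e =>
      (tendsto_nat_floor_mul_div_atTop (hw e)).comp tendsto_natCast_atTop_atTop
  have hmem := hclosed.mem_of_tendsto hlim (.of_forall fun n => by
    obtain ⟨J, hJ, hle⟩ := hz.exists_join_sum_natCast_le fun e => ⌊w e * n⌋₊
    refine Set.mem_biUnion hJ ?_
    simpa only [Set.mem_ofPred_eq, ← mul_div_assoc, ← sum_div]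
      using div_le_div_of_nonneg_right hle n.cast_nonneg)
  simpa using hmem

lemma mem_convexHull_of_forall_exists_dotProduct_le {s : Set (E → ℝ)} (hs : s.Finite) {x : E → ℝ}
    (hx : ∀ w : E → ℝ, ∃ y ∈ s, w ⬝ᵥ y ≤ w ⬝ᵥ x) : x ∈ convexHull ℝ s := by
  by_contra hxs
  obtain ⟨f, u, hfx, hfs⟩ :=
    geometric_hahn_banach_point_closed (convex_convexHull ℝ s) (hs.isClosed_convexHull ℝ) hxs
  classical
  obtain ⟨w, hw⟩ := (dotProductEquiv ℝ E).surjective f.toLinearMap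
  replace hw (y : E → ℝ) : w ⬝ᵥ y = f y := DFunLike.congr_fun hw y
  obtain ⟨y, hys, hyx⟩ := hx w
  rw [hw, hw] at hyx
  exact (hfs y (subset_convexHull ℝ s hys)).not_ge (hyx.trans hfx.le)

end Weights

section Polytope

variable {E : Type*}

/-- The vertex of the cube `[0, 1] ^ E` which encodes a set of edges. -/
noncomputable def incidenceVector (M : Finset E) : E → ℝ := (M : Set E).indicator 1

lemma incidenceVector_apply [DecidableEq E] (M : Finset E) (e : E) :
    incidenceVector M e = if e ∈ M then 1 else 0 := by
  simp [incidenceVector, Set.indicator_apply]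

variable [Fintype E]

lemma dotProduct_incidenceVector (w : E → ℝ) (M : Finset E) :
    w ⬝ᵥ incidenceVector M = ∑ e ∈ M, w e := by
  classical
  simp [dotProduct, incidenceVector_apply]

variable {V : Type*} {ends : E → Sym2 V} {τ : VertexChain V}

theorem mem_convexHull_joins [DecidableEq E] {x : E → ℝ}
    (hx : ∀ N, IsCutCover ends (τ + boundary ends N) fun e => if e ∈ N then 1 - x e else x e) :
    x ∈ convexHull ℝ (incidenceVector '' {J | boundary ends J = τ}) := by
  refine mem_convexHull_of_forall_exists_dotProduct_le (Set.toFinite _) fun w => ?_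
  -- Taking symmetric differences with the set of negative edges makes all weights nonnegative.
  let N : Finset E := {e | w e < 0}
  obtain ⟨J, hJ, hle⟩ := (hx N).exists_join_sum_le (w := fun e => |w e|) fun e => abs_nonneg _
  have habs (e : E) : |w e| = if e ∈ N then -w e else w e := by
    split_ifs with h
    · exact abs_of_neg (by simpa [N] using h)
    · exact abs_of_nonneg (by simpa [N] using h)
  refine ⟨_, ⟨J ∆ N, ?_, rfl⟩, ?_⟩
  · rw [Set.mem_ofPred, boundary_symmDiff, hJ, add_assoc, ZModModule.add_self, add_zero]
  have hsum (M : Finset E) (f : E → ℝ) : ∑ e ∈ M, f e = ∑ e, if e ∈ M then f e else 0 := by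
    rw [sum_ite_mem, univ_inter]
  rw [dotProduct_incidenceVector]
  calc ∑ e ∈ J ∆ N, w e = ∑ e ∈ J, |w e| + ∑ e ∈ N, w e := by
        rw [hsum (J ∆ N), hsum J, hsum N, ← sum_add_distrib]
        refine sum_congr rfl fun e _ => ?_
        simp only [habs, mem_symmDiff]
        grind
    _ ≤ ∑ e, (if e ∈ N then 1 - x e else x e) * |w e| + ∑ e ∈ N, w e := by gcongr
    _ = w ⬝ᵥ x := by
        rw [hsum N, dotProduct, ← sum_add_distrib]
        refine sum_congr rfl fun e _ => ?_
        rw [habs]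
        grind

theorem third_mem_convexHull_joins (hcut : ∀ S, #(cut ends S) ≠ 1) :
    (fun _ => 1 / 3) ∈
      convexHull ℝ (incidenceVector '' {M | boundary ends M = boundary ends univ}) := by
  classical
  refine mem_convexHull_joins fun N => ⟨fun e => by split_ifs <;> norm_num, fun S hS => ?_⟩
  have hodd : Odd (#(cut ends S) + #(N ∩ cut ends S)) := by
    rw [← ZMod.natCast_eq_one_iff_odd, ← hS, LinearMap.add_apply, boundary_apply, boundary_apply,
      univ_inter, Nat.cast_add]
  have h3 : 3 ≤ #(cut ends S) + #(N ∩ cut ends S) := by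
    have hle : #(N ∩ cut ends S) ≤ #(cut ends S) := card_le_card inter_subset_right
    have h1 := hcut S
    obtain ⟨m, hm⟩ := hodd
    lia
  calc (1 : ℝ) ≤ (#(cut ends S) + #(N ∩ cut ends S)) / 3 := by
        rw [le_div_iff₀ three_pos]
        exact_mod_cast h3
    _ = ∑ e ∈ cut ends S, (1 + if e ∈ N then 1 else 0) / 3 := by
        rw [← sum_div, sum_add_distrib, inter_comm, card_inter_eq_sum]
        simp
    _ = ∑ e ∈ cut ends S, if e ∈ N then 1 - 1 / 3 else 1 / 3 :=
        sum_congr rfl fun e _ => by split_ifs <;> norm_num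

lemma mem_convexHull_inter_of_le {W ι : Type*} [AddCommGroup W] [Module ℝ W] {s : Set W} {x : W}
    (hx : x ∈ convexHull ℝ s) {f : ι → W →ₗ[ℝ] ℝ} {c : ι → ℝ} (hle : ∀ y ∈ s, ∀ i, c i ≤ f i y)
    (heq : ∀ i, f i x = c i) : x ∈ convexHull ℝ (s ∩ {y | ∀ i, f i y = c i}) := by
  obtain ⟨κ, _, z, w, hzs, -, hw, hw1, rfl⟩ := eq_pos_convex_span_of_mem_convexHull hx
  refine (convex_convexHull ℝ _).sum_mem (fun k _ => (hw k).le) hw1 fun k _ =>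
    subset_convexHull ℝ _ ⟨hzs ⟨k, rfl⟩, fun i => ?_⟩
  have hsum : ∑ k, w k * (f i (z k) - c i) = 0 := by
    simp only [mul_sub, sum_sub_distrib, ← sum_mul, hw1, one_mul, ← heq i, map_sum, map_smul,
      smul_eq_mul, sub_self]
  have hk := (sum_eq_zero_iff_of_nonneg fun k _ =>
    mul_nonneg (hw k).le (sub_nonneg.2 (hle _ (hzs ⟨k, rfl⟩) i))).1 hsum k (mem_univ k)
  exact sub_eq_zero.1 ((mul_eq_zero.1 hk).resolve_left (hw k).ne')

end Polytope

section Splitting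

variable {V E ι : Type*} [DecidableEq V] {ends : E → Sym2 V} {pairOf : E → Option ι}
  {centre : ι → V}

/-- The vertex replacing `v` as an end of an edge in the pair `c`, where `c = none` for an edge
outside all pairs: the centre of the pair `i` is replaced by the new vertex `inr i`. -/
def splitVertex (centre : ι → V) (c : Option ι) (v : V) : V ⊕ ι :=
  c.elim (Sum.inl v) fun i => if v = centre i then Sum.inr i else Sum.inl v

/-- The multigraph in which every pair `i` of edges at the vertex `centre i` is detached from this
vertex and attached to a new vertex `inr i` instead, which is joined to `centre i` by a new edge
`inr i`. The pair of the edge `e` is `pairOf e`, with `none` for an edge outside all pairs. -/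
def splitEnds (ends : E → Sym2 V) (pairOf : E → Option ι) (centre : ι → V) :
    E ⊕ ι → Sym2 (V ⊕ ι) :=
  Sum.elim (fun e => (ends e).map (splitVertex centre (pairOf e)))
    fun i => s(Sum.inl (centre i), Sum.inr i)

@[simp]
lemma edgeBoundary_splitEnds_inr (i : ι) (S : V ⊕ ι → ZMod 2) :
    edgeBoundary (splitEnds ends pairOf centre (Sum.inr i)) S =
      S (Sum.inl (centre i)) + S (Sum.inr i) := rfl

variable [Fintype E]

lemma edgeBoundary_splitEnds_inl
    (hcentre : ∀ e i, pairOf e = some i → e ∈ star ends (centre i)) (e : E) (S : V ⊕ ι → ZMod 2) :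
    edgeBoundary (splitEnds ends pairOf centre (Sum.inl e)) S =
      edgeBoundary (ends e) (S ∘ Sum.inl) +
        (pairOf e).elim 0 fun i => edgeBoundary (splitEnds ends pairOf centre (Sum.inr i)) S := by
  rw [splitEnds, Sum.elim_inl, edgeBoundary_map]
  cases hi : pairOf e with
  | none => simp [splitVertex, comp_def]
  | some i =>
    obtain ⟨x, hx, hex⟩ := mem_star_iff_exists.1 (hcentre e i hi)
    simp only [hex, edgeBoundary_mk, comp_apply, splitVertex, Option.elim_some, if_pos, if_neg hx]
    rw [← splitEnds, edgeBoundary_splitEnds_inr]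
    linear_combination -CharTwo.add_self_eq_zero (S (Sum.inl (centre i)))

/-- The edges in the pair `i`. -/
def pair [DecidableEq ι] (pairOf : E → Option ι) (i : ι) : Finset E := {e | pairOf e = some i}

@[simp]
lemma mem_pair [DecidableEq ι] {i : ι} {e : E} : e ∈ pair pairOf i ↔ pairOf e = some i := by
  simp [pair]

lemma edgeBoundary_splitEnds_inl_of_eq_zero
    (hcentre : ∀ e i, pairOf e = some i → e ∈ star ends (centre i)) {S : V ⊕ ι → ZMod 2}
    (hS : ∀ i, edgeBoundary (splitEnds ends pairOf centre (Sum.inr i)) S = 0) (e : E) :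
    edgeBoundary (splitEnds ends pairOf centre (Sum.inl e)) S =
      edgeBoundary (ends e) (S ∘ Sum.inl) := by
  rw [edgeBoundary_splitEnds_inl hcentre]
  cases pairOf e <;> simp only [Option.elim_none, Option.elim_some, hS, add_zero]

lemma boundary_toLeft (hcentre : ∀ e i, pairOf e = some i → e ∈ star ends (centre i))
    (M : Finset (E ⊕ ι)) (S : V → ZMod 2) :
    boundary ends M.toLeft S =
      boundary (splitEnds ends pairOf centre) M (Sum.elim S (S ∘ centre)) := by
  have hgadget (i : ι) :
      edgeBoundary (splitEnds ends pairOf centre (Sum.inr i)) (Sum.elim S (S ∘ centre)) = 0 :=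
    CharTwo.add_self_eq_zero _
  rw [boundary_apply_eq_sum, boundary_apply_eq_sum, ← toLeft_disjSum_toRight (u := M),
    sum_disjSum, sum_eq_zero (s := M.toRight) fun i _ => hgadget i]
  simp only [edgeBoundary_splitEnds_inl_of_eq_zero hcentre hgadget, toLeft_disjSum,
    Sum.elim_comp_inl, add_zero]

variable [DecidableEq ι]

lemma edgeBoundary_splitEnds_inl_of_eq_ite
    (hcentre : ∀ e i, pairOf e = some i → e ∈ star ends (centre i)) {S : V ⊕ ι → ZMod 2} {i : ι}
    (hS : ∀ j, edgeBoundary (splitEnds ends pairOf centre (Sum.inr j)) S = if j = i then 1 else 0)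
    (e : E) :
    edgeBoundary (splitEnds ends pairOf centre (Sum.inl e)) S =
      edgeBoundary (ends e) (S ∘ Sum.inl) + if pairOf e = some i then 1 else 0 := by
  rw [edgeBoundary_splitEnds_inl hcentre]
  cases pairOf e <;> simp [hS, -edgeBoundary_splitEnds_inr]

variable [Fintype ι]

lemma star_splitEnds_inr (hcentre : ∀ e i, pairOf e = some i → e ∈ star ends (centre i)) (i : ι) :
    star (splitEnds ends pairOf centre) (Sum.inr i) = (pair pairOf i).disjSum {i} := by
  have hgadget (j : ι) : edgeBoundary (splitEnds ends pairOf centre (Sum.inr j))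
      (Pi.single (Sum.inr i) 1) = if j = i then 1 else 0 := by
    simp [Pi.single_apply]
  ext (e | j)
  · have hzero : (Pi.single (Sum.inr i) 1 : V ⊕ ι → ZMod 2) ∘ Sum.inl = 0 := by
      ext v
      simp
    rw [star, mem_cut, edgeBoundary_splitEnds_inl_of_eq_ite hcentre hgadget, hzero, map_zero,
      zero_add, inl_mem_disjSum]
    simp
  · rw [star, mem_cut, hgadget, inr_mem_disjSum, mem_singleton]
    simp

lemma card_cut_splitEnds_ne_one
    (hcentre : ∀ e i, pairOf e = some i → e ∈ star ends (centre i))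
    (hcut : ∀ S, #(cut ends S) ≠ 1) (hpair : ∀ S i, cut ends S ≠ pair pairOf i)
    (S : V ⊕ ι → ZMod 2) : #(cut (splitEnds ends pairOf centre) S) ≠ 1 := by
  by_cases hS : ∃ i, Sum.inr i ∈ cut (splitEnds ends pairOf centre) S
  · obtain ⟨i, hi⟩ := hS
    intro h1
    obtain ⟨f, hf⟩ := card_eq_one.1 h1
    obtain rfl : Sum.inr i = f := mem_singleton.1 (hf ▸ hi)
    have hzero {f : E ⊕ ι} (hfi : f ≠ Sum.inr i) :
        edgeBoundary (splitEnds ends pairOf centre f) S = 0 := by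
      by_contra h0
      exact hfi (mem_singleton.1 (hf ▸ mem_cut.2 (Fin.eq_one_of_ne_zero _ h0)))
    have hgadget (j : ι) :
        edgeBoundary (splitEnds ends pairOf centre (Sum.inr j)) S = if j = i then 1 else 0 := by
      split_ifs with hji
      · exact hji ▸ mem_cut.1 hi
      · exact hzero (Sum.inr_injective.ne hji)
    refine hpair (S ∘ Sum.inl) i (Finset.ext fun e => ?_)
    have he := edgeBoundary_splitEnds_inl_of_eq_ite hcentre hgadget e
    rw [hzero Sum.inl_ne_inr, eq_comm, CharTwo.add_eq_zero] at he
    rw [mem_cut, he]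
    simp
  · push Not at hS
    have hgadget (i : ι) : edgeBoundary (splitEnds ends pairOf centre (Sum.inr i)) S = 0 :=
      not_not.1 fun h0 => hS i (mem_cut.2 (Fin.eq_one_of_ne_zero _ h0))
    have hinl : cut (splitEnds ends pairOf centre) S = (cut ends (S ∘ Sum.inl)).disjSum ∅ := by
      ext (e | i)
      · simp [edgeBoundary_splitEnds_inl_of_eq_zero hcentre hgadget]
      · simpa using hS i
    rw [hinl, card_disjSum, card_empty, add_zero]
    exact hcut _

lemma card_star_splitEnds_inr
    (hcentre : ∀ e i, pairOf e = some i → e ∈ star ends (centre i)) {i : ι}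
    (hcard : #(pair pairOf i) = 2) : #(star (splitEnds ends pairOf centre) (Sum.inr i)) = 3 := by
  rw [star_splitEnds_inr hcentre, card_disjSum, hcard, card_singleton]

variable [DecidableEq E]

lemma odd_card_inter_star_splitEnds
    (hcentre : ∀ e i, pairOf e = some i → e ∈ star ends (centre i)) {i : ι}
    (hcard : #(pair pairOf i) = 2) {M : Finset (E ⊕ ι)}
    (hM : boundary (splitEnds ends pairOf centre) M =
      boundary (splitEnds ends pairOf centre) univ) :
    Odd #(M ∩ star (splitEnds ends pairOf centre) (Sum.inr i)) := by
  rw [← ZMod.natCast_eq_one_iff_odd, ← boundary_single, hM, boundary_single, univ_inter,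
    card_star_splitEnds_inr hcentre hcard]
  rfl

lemma toLeft_mem_of_card_inter_star_eq_one
    (hcentre : ∀ e i, pairOf e = some i → e ∈ star ends (centre i)) {M : Finset (E ⊕ ι)}
    (hM : boundary (splitEnds ends pairOf centre) M =
      boundary (splitEnds ends pairOf centre) univ)
    (hstar : ∀ i, #(M ∩ star (splitEnds ends pairOf centre) (Sum.inr i)) = 1) :
    boundary ends M.toLeft = boundary ends univ ∧ ∀ i, #(M.toLeft ∩ pair pairOf i) ≤ 1 := by
  constructor
  · have huniv : (univ : Finset (E ⊕ ι)).toLeft = univ := by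
      ext e
      simp
    ext1 S
    rw [boundary_toLeft hcentre, hM, ← boundary_toLeft hcentre, huniv]
  · intro i
    have hleft : (M ∩ star (splitEnds ends pairOf centre) (Sum.inr i)).toLeft =
        M.toLeft ∩ pair pairOf i := by
      rw [toLeft_inter, star_splitEnds_inr hcentre, toLeft_disjSum]
    exact hleft ▸ card_toLeft_le.trans (hstar i).le

omit [Fintype ι] in
theorem third_mem_convexHull_joins_of_pairs [Finite ι]
    (hcentre : ∀ e i, pairOf e = some i → e ∈ star ends (centre i))
    (hcard : ∀ i, #(pair pairOf i) = 2) (hcut : ∀ S, #(cut ends S) ≠ 1)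
    (hpair : ∀ S i, cut ends S ≠ pair pairOf i) :
    (fun _ => 1 / 3) ∈ convexHull ℝ (incidenceVector ''
      {M | boundary ends M = boundary ends univ ∧ ∀ i, #(M ∩ pair pairOf i) ≤ 1}) := by
  have := Fintype.ofFinite ι
  let f (i : ι) : (E ⊕ ι → ℝ) →ₗ[ℝ] ℝ :=
    ∑ e ∈ star (splitEnds ends pairOf centre) (Sum.inr i), LinearMap.proj e
  have hf (i : ι) (M : Finset (E ⊕ ι)) :
      f i (incidenceVector M) = #(M ∩ star (splitEnds ends pairOf centre) (Sum.inr i)) := by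
    simp [f, incidenceVector_apply, inter_comm M]
  have hsplit := third_mem_convexHull_joins (card_cut_splitEnds_ne_one hcentre hcut hpair)
  have hface := mem_convexHull_inter_of_le hsplit (f := f) (c := 1)
    (by
      rintro _ ⟨M, hM, rfl⟩ i
      rw [hf, Pi.one_apply, Nat.one_le_cast]
      exact (odd_card_inter_star_splitEnds hcentre (hcard i) hM).pos)
    (fun i => by simp [f, card_star_splitEnds_inr hcentre (hcard i)])
  have himage := Set.mem_image_of_mem (LinearMap.funLeft ℝ ℝ Sum.inl) hface
  rw [LinearMap.image_convexHull] at himage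
  refine convexHull_mono ?_ himage
  rintro _ ⟨_, ⟨⟨M, hM, rfl⟩, htight⟩, rfl⟩
  refine ⟨M.toLeft, toLeft_mem_of_card_inter_star_eq_one hcentre hM fun i => ?_, ?_⟩
  · have hone := (hf i M).symm.trans (htight i)
    rwa [Pi.one_apply, Nat.cast_eq_one] at hone
  · ext e
    simp [incidenceVector_apply, LinearMap.funLeft_apply]

end Splitting

section Distribution

lemma exists_distribution_of_mem_convexHull {E : Type*} [DecidableEq E] {𝓜 : Set (Finset E)}
    {x : E → ℝ} (hx : x ∈ convexHull ℝ (incidenceVector '' 𝓜)) :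
    ∃ (k : ℕ) (M : Fin k → Finset E) (p : Fin k → ℝ), (∀ i, M i ∈ 𝓜) ∧ (∀ i, 0 ≤ p i) ∧
      ∑ i, p i = 1 ∧ ∀ e, ∑ i with e ∈ M i, p i = x e := by
  obtain ⟨κ, _, w, z, hw, hw1, hz, rfl⟩ := mem_convexHull_iff_exists_fintype.1 hx
  choose M hM hMz using hz
  let φ := (Fintype.equivFin κ).symm
  refine ⟨_, M ∘ φ, w ∘ φ, fun i => hM _, fun i => hw _, ?_, fun e => ?_⟩
  · exact (φ.sum_comp w).trans hw1
  · simp only [sum_filter, comp_apply, ← hMz, Finset.sum_apply, Pi.smul_apply,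
      incidenceVector_apply, smul_eq_mul, mul_ite, mul_one, mul_zero]
    exact φ.sum_comp fun i => if e ∈ M i then w i else 0

lemma exists_option_eq_some_iff_mem {E ι : Type*} {s : ι → Finset E}
    (hs : Pairwise (Disjoint on s)) : ∃ c : E → Option ι, ∀ e i, c e = some i ↔ e ∈ s i := by
  classical
  refine ⟨fun e => if h : ∃ i, e ∈ s i then some h.choose else none, fun e i => ?_⟩
  by_cases h : ∃ i, e ∈ s i
  · simp only [dif_pos h, Option.some_inj]
    refine ⟨fun hi => hi ▸ h.choose_spec, fun hi => by_contra fun hne => ?_⟩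
    exact disjoint_left.1 (hs hne) h.choose_spec hi
  · simp only [dif_neg h, reduceCtorEq, false_iff]
    exact fun hi => h ⟨i, hi⟩

end Distribution

section SimpleGraph

variable {V : Type*} {G : SimpleGraph V}

lemma preconnected_deleteEdges_of_adj {v x : V} {D : Set (Sym2 V)}
    (hv : (G.induce {u | u ≠ v}).Preconnected) (hD : ∀ e ∈ D, v ∈ e) (hvx : G.Adj v x)
    (hx : s(v, x) ∉ D) : (G.deleteEdges D).Preconnected := by
  let φ : G.induce {u | u ≠ v} →g G.deleteEdges D :=
    { toFun := Subtype.val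
      map_rel' := fun {a b} hab => deleteEdges_adj.2 ⟨hab, fun hmem =>
        (Sym2.mem_iff.1 (hD _ hmem)).elim a.2.symm b.2.symm⟩ }
  have hreach (u : V) : (G.deleteEdges D).Reachable u x := by
    by_cases huv : u = v
    · exact huv ▸ (deleteEdges_adj.2 ⟨hvx, hx⟩).reachable
    · exact (hv ⟨u, huv⟩ ⟨x, hvx.ne'⟩).map φ
  exact fun u w => (hreach u).trans (hreach w).symm

variable [Fintype V]

lemma exists_adj_ne_of_connected_induce (hcard : 3 ≤ Fintype.card V)
    (h2 : ∀ v, (G.induce {u | u ≠ v}).Connected) (x y : V) : ∃ z, G.Adj x z ∧ z ≠ y := by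
  classical
  wlog hxy : x ≠ y generalizing y
  · obtain ⟨y', hy'⟩ := Fintype.exists_ne_of_one_lt_card (by lia) x
    obtain ⟨z, hxz, -⟩ := this y' hy'.symm
    exact ⟨z, hxz, not_not.1 hxy ▸ hxz.ne'⟩
  obtain ⟨w, -, hw⟩ : ∃ w ∈ univ, w ∉ ({x, y} : Finset V) :=
    exists_mem_notMem_of_card_lt_card (card_le_two.trans_lt hcard)
  simp only [mem_insert, mem_singleton, not_or] at hw
  have : Nontrivial {u | u ≠ y} :=
    ⟨⟨x, hxy⟩, ⟨w, hw.2⟩, fun h => hw.1 (congrArg Subtype.val h).symm⟩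
  obtain ⟨z, hz⟩ := (h2 y).preconnected.exists_adj_of_nontrivial ⟨x, hxy⟩
  exact ⟨z, hz, z.2⟩

lemma isEdgeConnected_two_of_connected_induce (hcard : 3 ≤ Fintype.card V)
    (h2 : ∀ v, (G.induce {u | u ≠ v}).Connected) : G.IsEdgeConnected 2 := by
  refine isEdgeConnected_two.2 fun e => ?_
  induction e with
  | _ x y =>
    obtain ⟨z, hxz, hzy⟩ := exists_adj_ne_of_connected_induce hcard h2 x y
    refine preconnected_deleteEdges_of_adj (h2 x).preconnected ?_ hxz ?_
    · rintro _ rfl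
      exact Sym2.mem_mk_left x y
    · simpa [hxz.ne'] using hzy

variable [DecidableRel G.Adj]

lemma preconnected_deleteEdges_of_card_lt_degree {v : V} {D : Finset (Sym2 V)}
    (hv : (G.induce {u | u ≠ v}).Preconnected) (hD : ∀ e ∈ D, v ∈ e) (hlt : #D < G.degree v) :
    (G.deleteEdges D).Preconnected := by
  classical
  rw [← card_incidenceFinset_eq_degree] at hlt
  obtain ⟨e, he, heD⟩ := exists_mem_notMem_of_card_lt_card hlt
  rw [mem_incidenceFinset] at he
  obtain ⟨x, rfl⟩ := Sym2.mem_iff_exists.1 he.2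
  exact preconnected_deleteEdges_of_adj hv hD he.1 heD

variable (G) in
/-- The ends of the edges of the simple graph `G`, viewed as a multigraph. -/
def edgeEnds : G.edgeFinset → Sym2 V := Subtype.val

lemma cut_edgeEnds_eq_empty {D : Set (Sym2 V)} (hconn : (G.deleteEdges D).Preconnected)
    {S : V → ZMod 2} (hD : ∀ e ∈ cut (edgeEnds G) S, edgeEnds G e ∈ D) :
    cut (edgeEnds G) S = ∅ := by
  have hstep {x y : V} (h : (G.deleteEdges D).Adj x y) : S x = S y := by
    rw [deleteEdges_adj] at h
    by_contra hne
    exact h.2 (hD ⟨s(x, y), mem_edgeFinset.2 h.1⟩ (mem_cut.2 (edgeBoundary_apply_eq_one.2 hne)))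
  have hconst (x y : V) : S x = S y := by
    obtain ⟨p⟩ := hconn x y
    induction p with
    | nil => rfl
    | cons h _ ih => exact (hstep h).trans ih
  refine eq_empty_of_forall_notMem fun e he => ?_
  rw [mem_cut] at he
  induction h : edgeEnds G e with
  | _ x y => exact edgeBoundary_apply_eq_one.1 (h ▸ he) (hconst x y)

lemma card_cut_edgeEnds_ne_one (hG : G.IsEdgeConnected 2) (S : V → ZMod 2) :
    #(cut (edgeEnds G) S) ≠ 1 := by
  intro h1
  obtain ⟨e, he⟩ := card_eq_one.1 h1
  have hempty := cut_edgeEnds_eq_empty (isEdgeConnected_two.1 hG (edgeEnds G e)) (S := S)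
    (by simp [he])
  exact singleton_ne_empty e (he.symm.trans hempty)

variable [DecidableEq V]

lemma card_inter_star_edgeEnds (M : Finset G.edgeFinset) (v : V) :
    #(M ∩ star (edgeEnds G) v) = #{e ∈ M.map (Embedding.subtype _) | v ∈ e} := by
  rw [filter_map, card_map, ← filter_mem_eq_inter]
  congr 1
  refine filter_congr fun e _ => mem_star_iff.trans (and_iff_left ?_)
  exact G.not_isDiag_of_mem_edgeFinset e.2

lemma even_degree_add_card_of_boundary_eq {M : Finset G.edgeFinset}
    (hM : boundary (edgeEnds G) M = boundary (edgeEnds G) univ) (v : V) :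
    Even (G.degree v + #{e ∈ M.map (Embedding.subtype _) | v ∈ e}) := by
  have hdeg : G.degree v = #(univ ∩ star (edgeEnds G) v) := by
    rw [card_inter_star_edgeEnds, ← attach_eq_univ, attach_map_val,
      ← card_incidenceFinset_eq_degree, incidenceFinset_eq_filter]
  rw [hdeg, ← card_inter_star_edgeEnds, ← ZMod.natCast_eq_zero_iff_even, Nat.cast_add,
    ← boundary_single, ← boundary_single, hM, ZModModule.add_self]

lemma third_mem_convexHull_joins_edgeEnds (hG : G.IsEdgeConnected 2) {P : Finset (Finset (Sym2 V))}
    (hPsub : ∀ p ∈ P, p ⊆ G.edgeFinset) (hPcard : ∀ p ∈ P, #p = 2)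
    (hPdisj : (P : Set (Finset (Sym2 V))).PairwiseDisjoint id)
    (hPvertex : ∀ p ∈ P, ∃ v, ∀ e ∈ p, v ∈ e)
    (hPconn : ∀ p ∈ P, (G.deleteEdges (p : Set (Sym2 V))).Preconnected) :
    (fun _ => 1 / 3) ∈ convexHull ℝ (incidenceVector ''
      {M | boundary (edgeEnds G) M = boundary (edgeEnds G) univ ∧
        ∀ p ∈ P, #(M.map (Embedding.subtype _) ∩ p) ≤ 1}) := by
  obtain ⟨c, hc⟩ := exists_option_eq_some_iff_mem (s := fun p : P => p.1)
    fun p q hpq => hPdisj p.2 q.2 (Subtype.coe_ne_coe.2 hpq)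
  choose v hv using hPvertex
  let pairOf : G.edgeFinset → Option P := c ∘ edgeEnds G
  have hpair {e : G.edgeFinset} {p : P} : e ∈ pair pairOf p ↔ edgeEnds G e ∈ p.1 :=
    mem_pair.trans (hc _ _)
  have hpairmap (p : P) : (pair pairOf p).map (Embedding.subtype _) = p.1 := by
    ext e
    simp only [mem_map, hpair]
    simpa [edgeEnds] using @hPsub p p.2 e
  refine convexHull_mono (Set.image_mono ?_) (third_mem_convexHull_joins_of_pairs
    (pairOf := pairOf) (centre := fun p => v p p.2) (fun e p hep => ?_) (fun p => ?_)
    (card_cut_edgeEnds_ne_one hG) fun S p hS => ?_)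
  · rintro M ⟨hM, hMpair⟩
    refine ⟨hM, fun p hp => ?_⟩
    have hmap : _ = p := hpairmap ⟨p, hp⟩
    rw [← hmap, ← map_inter, card_map]
    exact hMpair ⟨p, hp⟩
  · exact mem_star_iff.2 ⟨hv p p.2 _ ((hc _ _).1 hep), G.not_isDiag_of_mem_edgeFinset e.2⟩
  · rw [← card_map (Embedding.subtype _), hpairmap, hPcard p p.2]
  · have hempty := cut_edgeEnds_eq_empty (hPconn p p.2) (S := S) fun e he =>
      hpair.1 (hS ▸ he)
    have h2 := hPcard p p.2
    rw [← hpairmap, card_map, ← hS, hempty] at h2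
    exact absurd h2 (by simp)

end SimpleGraph

end Multigraph

theorem distribution_over_subsets_of_removable_pairing_general {V : Type*} [Fintype V]
    [DecidableEq V] (G : SimpleGraph V) [DecidableRel G.Adj] (hG : G.IsEdgeConnected 2)
    (P : Finset (Finset (Sym2 V))) (hPsub : ∀ p ∈ P, p ⊆ G.edgeFinset)
    (hPcard : ∀ p ∈ P, p.card = 2) (hPdisj : (P : Set (Finset (Sym2 V))).PairwiseDisjoint id)
    (hPvertex : ∀ p ∈ P, ∃ v, ∀ e ∈ p, v ∈ e)
    (hPconn : ∀ p ∈ P, (G.deleteEdges (p : Set (Sym2 V))).Preconnected) :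
    ∃ (k : ℕ) (M : Fin k → Finset (Sym2 V)) (p : Fin k → ℝ),
      (∀ i, M i ⊆ G.edgeFinset) ∧
      (∀ i, 0 ≤ p i) ∧ (∑ i, p i = 1) ∧
      (∀ e ∈ G.edgeFinset,
        ∑ i ∈ Finset.univ.filter (fun i => e ∈ M i), p i = 1 / 3) ∧
      (∀ i, ∀ q ∈ P, ((M i) ∩ q).card ≤ 1) ∧
      (∀ i, ∀ v : V,
        Even (G.degree v + ((M i).filter (fun e => v ∈ e)).card)) := by
  obtain ⟨k, M, p, hM, hp, hp1, hthird⟩ := Multigraph.exists_distribution_of_mem_convexHull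
    (Multigraph.third_mem_convexHull_joins_edgeEnds hG hPsub hPcard hPdisj hPvertex hPconn)
  refine ⟨k, fun i => (M i).map (Function.Embedding.subtype _), p, fun i => ?_, hp, hp1,
    fun e he => ?_, fun i => (hM i).2,
    fun i => Multigraph.even_degree_add_card_of_boundary_eq (hM i).1⟩
  · exact Finset.map_subtype_subset _
  · rw [← hthird ⟨e, he⟩]
    simp [mem_edgeFinset.1 he]

/-- A 2-vertex-connected simple graph on at least 3 vertices with a
removable pairing `(R, P)` admits a finite distribution over edge subsets such that
(a) each edge is picked with total probability `1/3`, (b) each chosen subset contains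
at most one edge of every pair of `P`, and (c) adding a chosen subset to `G` makes
every vertex degree even. -/
theorem distribution_over_subsets_of_removable_pairing
    {V : Type*} [Fintype V] [DecidableEq V]
    (G : SimpleGraph V) [DecidableRel G.Adj]
    (hcard : 3 ≤ Fintype.card V)
    (hconn : G.Connected)
    (h2vc : ∀ v : V, (G.induce {u : V | u ≠ v}).Connected)
    (R : Finset (Sym2 V)) (P : Finset (Finset (Sym2 V)))
    (hR : R ⊆ G.edgeFinset)
    (hPpair : ∀ p ∈ P, p.card = 2)
    (hPsub : ∀ p ∈ P, p ⊆ R)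
    (hPdisj : ∀ p ∈ P, ∀ q ∈ P, p ≠ q → Disjoint p q)
    (hPdeg : ∀ p ∈ P, ∃ v : V, (∀ e ∈ p, v ∈ e) ∧ 3 ≤ G.degree v)
    (hPdel : ∀ D : Finset (Sym2 V), D ⊆ R → (∀ p ∈ P, (D ∩ p).card ≤ 1) →
      (G.deleteEdges (D : Set (Sym2 V))).Connected) :
    ∃ (k : ℕ) (M : Fin k → Finset (Sym2 V)) (p : Fin k → ℝ),
      (∀ i, M i ⊆ G.edgeFinset) ∧
      (∀ i, 0 ≤ p i) ∧ (∑ i, p i = 1) ∧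
      (∀ e ∈ G.edgeFinset,
        ∑ i ∈ Finset.univ.filter (fun i => e ∈ M i), p i = 1 / 3) ∧
      (∀ i, ∀ q ∈ P, ((M i) ∩ q).card ≤ 1) ∧
      (∀ i, ∀ v : V,
        Even (G.degree v + ((M i).filter (fun e => v ∈ e)).card)) :=
  distribution_over_subsets_of_removable_pairing_general G
    (Multigraph.isEdgeConnected_two_of_connected_induce hcard h2vc) P
    (fun p hp => (hPsub p hp).trans hR) hPpair (fun p hp q hq => hPdisj p hp q hq)
    (fun p hp => (hPdeg p hp).imp fun _ hv => hv.1) fun p hp => by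
      obtain ⟨v, hv, hdeg⟩ := hPdeg p hp
      exact Multigraph.preconnected_deleteEdges_of_card_lt_degree (h2vc v).preconnected hv
        (by rw [hPpair p hp]; exact hdeg)
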